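/- For every integer N ≥ 2 and every real q with 0 < q < 1: (∑ over n ∈ (ℤ + 1/2)^N, i.e. vectors with all components in ℤ + 1/2, of q^((1/2)·∑_{j=1}^N (n_j + (N−j+1)/(2N))²)) · ∏_{k=1}^∞ (1 + q^(k−1)) / ∏_{k=1}^∞ (1−q^k)^N equals q^((N−1)(2N−1)/(48N)) · 2 · ∏_{k=1}^∞ (1 + q^(k−1/2)) / ∏_{k=1}^∞ (1 − q^((2k−1)/(2N))). -/

import Mathlib

open scoped BigOperators

/-!
Put `p = q^(1/(2N))`. Up to a power of `q`, the sum over `(ℤ + 1/2)^N` is the product of the theta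
series `∑_m (p^N)^(m²) (p^j)^m` for `0 ≤ j < N`, and Jacobi's triple product evaluates each of them
as `(q; q)_∞ (-p^(N+j); q)_∞ (-p^(N-j); q)_∞`. Together with the factor `(-p^(2N); q)_∞` of the
Ramond fermion, the exponents `N ± j` and `2N` run once through `1, …, 2N`, except that `N` occurs
twice. As `q = p^(2N)`, all factors other than `(q; q)_∞` thus multiply to
`(-p; p)_∞ (-p^N; q)_∞`, and Euler's identity `(-p; p)_∞ = 1 / (p; p²)_∞` gives the right-hand
side.

The triple product is the limit of its finite form, whose coefficients are the central Gaussian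
binomials `[2n choose n + j]_q`; these are bounded and tend to `1 / (q; q)_∞`, so dominated
convergence applies.
-/

open Filter Finset Topology

section QPochhammer

variable {R : Type*} [CommRing R]

/-- The finite `q`-Pochhammer symbol `(a; q)_n = ∏_{0 ≤ k < n} (1 - a q^k)`. -/
def qPochhammer (a q : R) (n : ℕ) : R := ∏ k ∈ range n, (1 - a * q ^ k)

/-- The infinite `q`-Pochhammer symbol `(a; q)_∞ = ∏_{k ≥ 0} (1 - a q^k)`, in terms of which all
the products of the character identity are written. It is only meaningful where the product
converges, e.g. for `‖q‖ < 1` in a complete normed field. -/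
noncomputable def qPochhammerInf [TopologicalSpace R] (a q : R) : R := ∏' k : ℕ, (1 - a * q ^ k)

lemma qPochhammer_zero (a q : R) : qPochhammer a q 0 = 1 := rfl

lemma qPochhammer_succ (a q : R) (n : ℕ) :
    qPochhammer a q (n + 1) = qPochhammer a q n * (1 - a * q ^ n) :=
  prod_range_succ _ n

lemma qPochhammer_mul_left (a q : R) (m n : ℕ) :
    qPochhammer a q (m * n) = ∏ i ∈ range m, qPochhammer (a * q ^ i) (q ^ m) n := by
  induction n with
  | zero => simp [qPochhammer_zero]
  | succ n ih =>
    simp only [qPochhammer_succ, prod_mul_distrib, ← ih]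
    rw [Nat.mul_succ, qPochhammer, prod_range_add]
    refine congr_arg₂ _ rfl (prod_congr rfl fun i _ => ?_)
    rw [pow_add, pow_mul]
    ring

end QPochhammer

section QPochhammerInf

variable {𝕜 : Type*} [NormedField 𝕜] {a q : 𝕜}

lemma pow_succ_ne_one_of_norm_lt_one (hq : ‖q‖ < 1) (n : ℕ) : q ^ (n + 1) ≠ 1 := by
  intro h
  have hlt : ‖q ^ (n + 1)‖ < 1 := by
    rw [norm_pow]
    exact pow_lt_one₀ (norm_nonneg q) hq n.succ_ne_zero
  simp [h] at hlt

lemma summable_norm_neg_mul_pow (a : 𝕜) (hq : ‖q‖ < 1) : Summable fun k : ℕ => ‖-(a * q ^ k)‖ := by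
  simpa only [norm_neg, norm_mul] using
    (summable_norm_geometric_of_norm_lt_one hq).mul_left ‖a‖

variable [CompleteSpace 𝕜]

lemma multipliable_one_sub_mul_pow (a : 𝕜) (hq : ‖q‖ < 1) :
    Multipliable fun k : ℕ => 1 - a * q ^ k := by
  simpa only [sub_eq_add_neg] using
    multipliable_one_add_of_summable (summable_norm_neg_mul_pow a hq)

lemma tendsto_qPochhammer (a : 𝕜) (hq : ‖q‖ < 1) :
    Tendsto (qPochhammer a q) atTop (𝓝 (qPochhammerInf a q)) :=
  (multipliable_one_sub_mul_pow a hq).tendsto_prod_tprod_nat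

lemma qPochhammerInf_ne_zero (hq : ‖q‖ < 1) (h : ∀ k, a * q ^ k ≠ 1) :
    qPochhammerInf a q ≠ 0 := by
  simpa only [qPochhammerInf, sub_eq_add_neg] using
    tprod_one_add_ne_zero_of_summable
      (fun k => by simpa only [← sub_eq_add_neg] using sub_ne_zero.mpr (h k).symm)
      (summable_norm_neg_mul_pow a hq)

lemma qPochhammerInf_self_ne_zero (hq : ‖q‖ < 1) : qPochhammerInf q q ≠ 0 :=
  qPochhammerInf_ne_zero hq fun k => by
    simpa only [pow_succ'] using pow_succ_ne_one_of_norm_lt_one hq k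

lemma qPochhammerInf_eq_one_sub_mul (a : 𝕜) (hq : ‖q‖ < 1) :
    qPochhammerInf a q = (1 - a) * qPochhammerInf (a * q) q := by
  have hshift (k : ℕ) : 1 - a * q ^ (k + 1) = 1 - a * q * q ^ k := by ring
  rw [qPochhammerInf, tprod_eq_zero_mul', pow_zero, mul_one, tprod_congr hshift, qPochhammerInf]
  exact (multipliable_one_sub_mul_pow (a * q) hq).congr fun k => (hshift k).symm

lemma qPochhammerInf_mul_neg (a : 𝕜) (hq : ‖q‖ < 1) :
    qPochhammerInf a q * qPochhammerInf (-a) q = qPochhammerInf (a ^ 2) (q ^ 2) := by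
  rw [qPochhammerInf, qPochhammerInf, ← (multipliable_one_sub_mul_pow a hq).tprod_mul
    (multipliable_one_sub_mul_pow (-a) hq), qPochhammerInf]
  exact tprod_congr fun k => by ring

lemma prod_qPochhammerInf_mul_pow (a : 𝕜) (hq : ‖q‖ < 1) {m : ℕ} (hm : m ≠ 0) :
    ∏ i ∈ range m, qPochhammerInf (a * q ^ i) (q ^ m) = qPochhammerInf a q := by
  have hqm : ‖q ^ m‖ < 1 := by
    rw [norm_pow]
    exact pow_lt_one₀ (norm_nonneg q) hq hm
  have hleft : Tendsto (fun n => qPochhammer a q (m * n)) atTop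
      (𝓝 (∏ i ∈ range m, qPochhammerInf (a * q ^ i) (q ^ m))) := by
    simp only [qPochhammer_mul_left]
    exact tendsto_finsetProd _ fun i _ => tendsto_qPochhammer _ hqm
  exact tendsto_nhds_unique hleft
    ((tendsto_qPochhammer a hq).comp (tendsto_id.const_mul_atTop' (Nat.pos_of_ne_zero hm)))

lemma tprod_one_add_pow (hq : ‖q‖ < 1) : ∏' k : ℕ, (1 + q ^ k) = 2 * qPochhammerInf (-q) q := by
  calc ∏' k : ℕ, (1 + q ^ k) = qPochhammerInf (-1) q := by
        simp only [qPochhammerInf, neg_mul, one_mul, sub_neg_eq_add]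
    _ = 2 * qPochhammerInf (-q) q := by
        rw [qPochhammerInf_eq_one_sub_mul (-1) hq, neg_one_mul, sub_neg_eq_add, one_add_one_eq_two]

lemma tprod_one_sub_pow_succ_pow (hq : ‖q‖ < 1) (N : ℕ) :
    ∏' k : ℕ, (1 - q ^ (k + 1)) ^ N = qPochhammerInf q q ^ N := by
  simp only [pow_succ']
  exact (multipliable_one_sub_mul_pow q hq).tprod_pow N

lemma qPochhammerInf_neg_self_mul_odd (hq : ‖q‖ < 1) :
    qPochhammerInf (-q) q * qPochhammerInf q (q ^ 2) = 1 := by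
  have hsplit : qPochhammerInf q (q ^ 2) * qPochhammerInf (q ^ 2) (q ^ 2) = qPochhammerInf q q := by
    rw [← prod_qPochhammerInf_mul_pow q hq two_ne_zero]
    simp [prod_range_succ, sq]
  apply mul_right_cancel₀ (qPochhammerInf_self_ne_zero hq)
  linear_combination hsplit + qPochhammerInf q (q ^ 2) * qPochhammerInf_mul_neg q hq

end QPochhammerInf

section CentralGaussBinom

variable {K : Type*} [Field K] {q : K}

/-- The reciprocal `1 / (q; q)_i`, extended by `0` to negative `i` (where `1 / (q; q)_i` has the
factor `1 - q^0` in its numerator); it makes the recurrences below hold for all integers. -/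
def qFactorialInv (q : K) : ℤ → K
  | .ofNat n => (qPochhammer q q n)⁻¹
  | .negSucc _ => 0

lemma qFactorialInv_natCast (q : K) (n : ℕ) : qFactorialInv q n = (qPochhammer q q n)⁻¹ := rfl

lemma qFactorialInv_of_neg (q : K) {i : ℤ} (hi : i < 0) : qFactorialInv q i = 0 := by
  obtain ⟨n, rfl⟩ := Int.eq_negSucc_of_lt_zero hi
  rfl

lemma qFactorialInv_sub_one (hq : ∀ n : ℕ, q ^ (n + 1) ≠ 1) (i : ℤ) :
    qFactorialInv q (i - 1) = (1 - q ^ i) * qFactorialInv q i := by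
  rcases lt_trichotomy i 0 with hi | rfl | hi
  · simp [qFactorialInv_of_neg q hi, qFactorialInv_of_neg q (show i - 1 < 0 by lia)]
  · simp [qFactorialInv_of_neg q (show (-1 : ℤ) < 0 by lia)]
  · obtain ⟨n, rfl⟩ : ∃ n : ℕ, i = (n + 1 : ℕ) := ⟨(i - 1).toNat, by lia⟩
    have hn : 1 - q ^ (n + 1) ≠ 0 := sub_ne_zero.mpr (hq n).symm
    rw [show ((n + 1 : ℕ) : ℤ) - 1 = n by lia, qFactorialInv_natCast, qFactorialInv_natCast,
      qPochhammer_succ, ← pow_succ', zpow_natCast, mul_inv_rev, mul_inv_cancel_left₀ hn]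

/-- The central Gaussian binomial coefficient `[2n choose n + j]_q`, indexed symmetrically by
`j : ℤ` and vanishing for `|j| > n`. -/
def centralGaussBinom (q : K) (n : ℕ) (j : ℤ) : K :=
  qPochhammer q q (2 * n) * qFactorialInv q (n - j) * qFactorialInv q (n + j)

lemma centralGaussBinom_zero (q : K) (j : ℤ) :
    centralGaussBinom q 0 j = if j = 0 then 1 else 0 := by
  have hzero : qFactorialInv q 0 = 1 := inv_one
  rcases lt_trichotomy j 0 with hj | rfl | hj
  · simp [centralGaussBinom, hj.ne, qFactorialInv_of_neg q hj]
  · simp [centralGaussBinom, qPochhammer_zero, hzero]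
  · simp [centralGaussBinom, hj.ne', qFactorialInv_of_neg q (neg_neg_of_pos hj)]

lemma centralGaussBinom_succ (hq0 : q ≠ 0) (hq : ∀ n : ℕ, q ^ (n + 1) ≠ 1) (n : ℕ) (j : ℤ) :
    centralGaussBinom q (n + 1) j = (1 + q ^ (2 * n + 1)) * centralGaussBinom q n j +
      q ^ ((n : ℤ) + 1 - j) * centralGaussBinom q n (j - 1) +
      q ^ ((n : ℤ) + 1 + j) * centralGaussBinom q n (j + 1) := by
  have hpow : q ^ (2 * n + 1) = q ^ ((n : ℤ) - j) * q ^ ((n : ℤ) + j) * q := by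
    rw [← zpow_add₀ hq0, ← zpow_add_one₀ hq0, ← zpow_natCast]
    congr 1
    push_cast
    ring
  have hx : q ^ ((n : ℤ) + 1 - j) = q ^ ((n : ℤ) - j) * q := by
    rw [← zpow_add_one₀ hq0, sub_add_eq_add_sub]
  have hy : q ^ ((n : ℤ) + 1 + j) = q ^ ((n : ℤ) + j) * q := by
    rw [← zpow_add_one₀ hq0, add_right_comm]
  have hminus := qFactorialInv_sub_one hq ((n : ℤ) + 1 - j)
  have hplus := qFactorialInv_sub_one hq ((n : ℤ) + 1 + j)
  have hminus' := qFactorialInv_sub_one hq ((n : ℤ) - j)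
  have hplus' := qFactorialInv_sub_one hq ((n : ℤ) + j)
  have hfac : qPochhammer q q (2 * (n + 1)) =
      qPochhammer q q (2 * n) * (1 - q ^ (2 * n + 1)) * (1 - q ^ (2 * n + 1) * q) := by
    rw [mul_add_one, qPochhammer_succ, qPochhammer_succ]
    ring
  rw [show (n : ℤ) + 1 - j - 1 = n - j by ring, hx] at hminus
  rw [show (n : ℤ) + 1 + j - 1 = n + j by ring, hy] at hplus
  simp only [centralGaussBinom, Nat.cast_add_one]
  rw [show (n : ℤ) - (j - 1) = n + 1 - j by ring, show (n : ℤ) + (j + 1) = n + 1 + j by ring,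
    show (n : ℤ) - (j + 1) = n - j - 1 by ring, show (n : ℤ) + (j - 1) = n + j - 1 by ring,
    hminus', hplus', hminus, hplus, hx, hy, hfac, hpow]
  ring

variable {t z : K}

lemma zpow_sq_mul_zpow_sub_one (ht : t ≠ 0) (hz : z ≠ 0) (n : ℕ) (j : ℤ) :
    t * z * (t ^ 2) ^ n * (t ^ ((j - 1) ^ 2) * z ^ (j - 1)) =
      (t ^ 2) ^ ((n : ℤ) + 1 - j) * (t ^ (j ^ 2) * z ^ j) := by
  have ht_pow : t * (t ^ 2) ^ n * t ^ ((j - 1) ^ 2) =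
      (t ^ 2) ^ ((n : ℤ) + 1 - j) * t ^ (j ^ 2) := by
    simp only [← zpow_natCast, ← zpow_mul, ← zpow_add₀ ht, ← zpow_one_add₀ ht]
    congr 1
    push_cast
    ring
  rw [zpow_sub_one₀ hz, ← mul_assoc ((t ^ 2) ^ _), ← ht_pow]
  field_simp

lemma zpow_sq_mul_zpow_add_one (ht : t ≠ 0) (hz : z ≠ 0) (n : ℕ) (j : ℤ) :
    t * z⁻¹ * (t ^ 2) ^ n * (t ^ ((j + 1) ^ 2) * z ^ (j + 1)) =
      (t ^ 2) ^ ((n : ℤ) + 1 + j) * (t ^ (j ^ 2) * z ^ j) := by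
  simpa only [← neg_add', inv_zpow', neg_neg, neg_sq, sub_neg_eq_add] using
    zpow_sq_mul_zpow_sub_one ht (inv_ne_zero hz) n (-j)

variable [TopologicalSpace K] [IsTopologicalRing K]

lemma finite_jacobi_triple_product (ht0 : t ≠ 0) (ht : ∀ n : ℕ, (t ^ 2) ^ (n + 1) ≠ 1)
    (hz : z ≠ 0) (n : ℕ) :
    HasSum (fun j : ℤ => centralGaussBinom (t ^ 2) n j * (t ^ (j ^ 2) * z ^ j))
      (qPochhammer (-(t * z)) (t ^ 2) n * qPochhammer (-(t * z⁻¹)) (t ^ 2) n) := by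
  induction n with
  | zero =>
    have hsupp (j : ℤ) (hj : j ≠ 0) :
        centralGaussBinom (t ^ 2) 0 j * (t ^ (j ^ 2) * z ^ j) = 0 := by
      simp [centralGaussBinom_zero, hj]
    simpa [qPochhammer_zero, centralGaussBinom_zero] using hasSum_single 0 hsupp
  | succ n ih =>
    have hprev := ((Equiv.subRight (1 : ℤ)).hasSum_iff.mpr ih).mul_left (t * z * (t ^ 2) ^ n)
    have hnext := ((Equiv.addRight (1 : ℤ)).hasSum_iff.mpr ih).mul_left (t * z⁻¹ * (t ^ 2) ^ n)
    have hstep := ((ih.mul_left (1 + (t ^ 2) ^ (2 * n + 1))).add hprev).add hnext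
    have hfactor : qPochhammer (-(t * z)) (t ^ 2) (n + 1) *
        qPochhammer (-(t * z⁻¹)) (t ^ 2) (n + 1) =
        (1 + (t ^ 2) ^ (2 * n + 1) + t * z * (t ^ 2) ^ n + t * z⁻¹ * (t ^ 2) ^ n) *
          (qPochhammer (-(t * z)) (t ^ 2) n * qPochhammer (-(t * z⁻¹)) (t ^ 2) n) := by
      rw [qPochhammer_succ, qPochhammer_succ]
      field_simp
      ring
    rw [hfactor, add_mul, add_mul]
    refine hstep.congr_fun fun j => ?_
    simp only [Function.comp_apply, Equiv.subRight_apply, Equiv.coe_addRight]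
    rw [centralGaussBinom_succ (pow_ne_zero 2 ht0) ht]
    linear_combination
      -centralGaussBinom (t ^ 2) n (j - 1) * zpow_sq_mul_zpow_sub_one ht0 hz n j -
        centralGaussBinom (t ^ 2) n (j + 1) * zpow_sq_mul_zpow_add_one ht0 hz n j

end CentralGaussBinom

section JacobiTripleProduct

variable {𝕜 : Type*} [NormedField 𝕜] {q t z : 𝕜}

lemma summable_pow_sq_mul_pow [CompleteSpace 𝕜] (ht : ‖t‖ < 1) (z : 𝕜) :
    Summable fun n : ℕ => t ^ (n ^ 2) * z ^ n := by
  have hratio : Tendsto (fun n : ℕ => ‖t ^ (2 * n + 1) * z‖) atTop (𝓝 0) := by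
    have hpow := (tendsto_pow_atTop_nhds_zero_of_norm_lt_one ht).comp
      (tendsto_atTop_mono (fun n : ℕ => show n ≤ 2 * n + 1 by lia) tendsto_id)
    simpa using (hpow.mul_const z).norm
  refine summable_of_ratio_norm_eventually_le one_half_lt_one ?_
  filter_upwards [hratio.eventually_le_const one_half_pos] with n hn
  calc ‖t ^ ((n + 1) ^ 2) * z ^ (n + 1)‖ = ‖t ^ (2 * n + 1) * z‖ * ‖t ^ (n ^ 2) * z ^ n‖ := by
        rw [← norm_mul]
        ring_nf
    _ ≤ 1 / 2 * ‖t ^ (n ^ 2) * z ^ n‖ := by gcongr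

lemma summable_norm_zpow_sq_mul_zpow (ht : ‖t‖ < 1) (z : 𝕜) :
    Summable fun j : ℤ => ‖t ^ (j ^ 2) * z ^ j‖ := by
  have hnorm : ‖‖t‖‖ < 1 := by rwa [norm_norm]
  refine .of_nat_of_neg ((summable_pow_sq_mul_pow hnorm ‖z‖).congr fun n => ?_)
    ((summable_pow_sq_mul_pow hnorm ‖z⁻¹‖).congr fun n => ?_)
  · rw [norm_mul, ← Nat.cast_pow, zpow_natCast, zpow_natCast, norm_pow, norm_pow]
  · rw [norm_mul, neg_sq, ← Nat.cast_pow, zpow_natCast, zpow_neg, ← inv_zpow, zpow_natCast,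
      norm_pow, norm_pow]

variable [CompleteSpace 𝕜]

lemma tendsto_qFactorialInv (hq : ‖q‖ < 1) :
    Tendsto (qFactorialInv q) atTop (𝓝 (qPochhammerInf q q)⁻¹) := by
  rw [← Nat.map_cast_int_atTop, tendsto_map'_iff]
  exact (tendsto_qPochhammer q hq).inv₀ (qPochhammerInf_self_ne_zero hq)

lemma tendsto_centralGaussBinom (hq : ‖q‖ < 1) (j : ℤ) :
    Tendsto (fun n => centralGaussBinom q n j) atTop (𝓝 (qPochhammerInf q q)⁻¹) := by
  have hnum := (tendsto_qPochhammer q hq).comp (tendsto_id.const_mul_atTop' two_pos)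
  have hminus := (tendsto_qFactorialInv hq).comp
    (tendsto_atTop_add_const_right _ (-j) tendsto_natCast_atTop_atTop)
  have hplus := (tendsto_qFactorialInv hq).comp
    (tendsto_atTop_add_const_right _ j tendsto_natCast_atTop_atTop)
  have hlim := (hnum.mul hminus).mul hplus
  rwa [mul_inv_cancel₀ (qPochhammerInf_self_ne_zero hq), one_mul] at hlim

lemma exists_norm_qFactorialInv_le (hq : ‖q‖ < 1) : ∃ C, ∀ i, ‖qFactorialInv q i‖ ≤ C := by
  obtain ⟨C, hC⟩ := ((tendsto_qPochhammer q hq).inv₀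
    (qPochhammerInf_self_ne_zero hq)).norm.bddAbove_range
  rw [mem_upperBounds, Set.forall_mem_range] at hC
  refine ⟨C, fun i => ?_⟩
  cases i with
  | ofNat n => exact hC n
  | negSucc n => simpa [qFactorialInv] using (norm_nonneg _).trans (hC 0)

lemma exists_norm_centralGaussBinom_le (hq : ‖q‖ < 1) :
    ∃ C, ∀ n j, ‖centralGaussBinom q n j‖ ≤ C := by
  obtain ⟨A, hA⟩ := (tendsto_qPochhammer q hq).norm.bddAbove_range
  rw [mem_upperBounds, Set.forall_mem_range] at hA
  obtain ⟨B, hB⟩ := exists_norm_qFactorialInv_le hq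
  have hB0 : 0 ≤ B := (norm_nonneg _).trans (hB 0)
  have hA0 : 0 ≤ A := (norm_nonneg _).trans (hA 0)
  refine ⟨A * B * B, fun n j => ?_⟩
  rw [centralGaussBinom, norm_mul, norm_mul]
  gcongr
  exacts [hA _, hB _, hB _]

theorem jacobi_triple_product (ht : ‖t‖ < 1) (hz : z ≠ 0) :
    ∑' j : ℤ, t ^ (j ^ 2) * z ^ j = qPochhammerInf (t ^ 2) (t ^ 2) *
      qPochhammerInf (-(t * z)) (t ^ 2) * qPochhammerInf (-(t * z⁻¹)) (t ^ 2) := by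
  rcases eq_or_ne t 0 with rfl | ht0
  · rw [tsum_eq_single 0 fun j hj => by simp [zero_zpow _ (pow_ne_zero 2 hj)]]
    simp [qPochhammerInf]
  have hq : ‖t ^ 2‖ < 1 := by
    rw [norm_pow]
    exact pow_lt_one₀ (norm_nonneg t) ht two_ne_zero
  obtain ⟨C, hC⟩ := exists_norm_centralGaussBinom_le hq
  have hsum : Tendsto
      (fun n => ∑' j : ℤ, centralGaussBinom (t ^ 2) n j * (t ^ (j ^ 2) * z ^ j)) atTop
      (𝓝 (∑' j : ℤ, (qPochhammerInf (t ^ 2) (t ^ 2))⁻¹ * (t ^ (j ^ 2) * z ^ j))) := by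
    refine tendsto_tsum_of_dominated_convergence
      ((summable_norm_zpow_sq_mul_zpow ht z).mul_left C)
      (fun j => (tendsto_centralGaussBinom hq j).mul_const _) (.of_forall fun n j => ?_)
    rw [norm_mul]
    gcongr
    exact hC n j
  have hprod := (tendsto_qPochhammer (-(t * z)) hq).mul (tendsto_qPochhammer (-(t * z⁻¹)) hq)
  have hlim := tendsto_nhds_unique (hsum.congr fun n => (finite_jacobi_triple_product ht0
    (pow_succ_ne_one_of_norm_lt_one hq) hz n).tsum_eq) hprod
  rw [tsum_mul_left, inv_mul_eq_iff_eq_mul₀ (qPochhammerInf_self_ne_zero hq)] at hlim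
  rw [hlim, mul_assoc]

end JacobiTripleProduct

section ThetaProduct

lemma prod_range_add_mul_sub_mul {M : Type*} [CommMonoid M] (g : ℕ → M) (N : ℕ) :
    (∏ j ∈ range N, g (N + j) * g (N - j)) * g (2 * N) =
      (∏ i ∈ range (2 * N), g (i + 1)) * g N := by
  have hlow : ∏ j ∈ range N, g (N - j) = ∏ i ∈ range N, g (i + 1) := by
    rw [← prod_range_reflect]
    refine prod_congr rfl fun j hj => ?_
    rw [mem_range] at hj
    congr 1
    lia
  have hhigh : (∏ j ∈ range N, g (N + j)) * g (2 * N) =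
      (∏ j ∈ range N, g (N + j + 1)) * g N := by
    rw [two_mul, ← prod_range_succ fun j => g (N + j), prod_range_succ']
    rfl
  rw [two_mul, prod_range_add, ← two_mul, prod_mul_distrib, hlow, mul_right_comm, hhigh,
    mul_right_comm, mul_comm (∏ j ∈ range N, g (N + j + 1))]

variable {𝕜 : Type*} [NormedField 𝕜] [CompleteSpace 𝕜] {p : 𝕜} {N : ℕ}

theorem prod_theta_mul_qPochhammerInf (hp0 : p ≠ 0) (hp : ‖p‖ < 1) (hN : N ≠ 0) :
    (∏ j ∈ range N, ∑' m : ℤ, (p ^ N) ^ (m ^ 2) * (p ^ j) ^ m) *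
        qPochhammerInf (-p ^ (2 * N)) (p ^ (2 * N)) * qPochhammerInf p (p ^ 2) =
      qPochhammerInf (p ^ (2 * N)) (p ^ (2 * N)) ^ N * qPochhammerInf (-p ^ N) (p ^ (2 * N)) := by
  let g (r : ℕ) : 𝕜 := qPochhammerInf (-p ^ r) (p ^ (2 * N))
  have hpN : ‖p ^ N‖ < 1 := by
    rw [norm_pow]
    exact pow_lt_one₀ (norm_nonneg p) hp hN
  have htheta : ∀ j ∈ range N, ∑' m : ℤ, (p ^ N) ^ (m ^ 2) * (p ^ j) ^ m =
      qPochhammerInf (p ^ (2 * N)) (p ^ (2 * N)) * (g (N + j) * g (N - j)) := by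
    intro j hj
    rw [jacobi_triple_product hpN (pow_ne_zero j hp0), ← pow_mul, mul_comm N 2, ← pow_add,
      ← pow_sub₀ p hp0 (mem_range.mp hj).le, mul_assoc]
  have hresidues : ∏ i ∈ range (2 * N), g (i + 1) = qPochhammerInf (-p) p := by
    rw [← prod_qPochhammerInf_mul_pow (-p) hp (mul_ne_zero two_ne_zero hN)]
    simp only [g, pow_succ', neg_mul]
  have hshuffle := prod_range_add_mul_sub_mul g N
  rw [hresidues] at hshuffle
  rw [prod_congr rfl htheta, prod_mul_distrib, prod_const, card_range]
  linear_combination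
    qPochhammerInf (p ^ (2 * N)) (p ^ (2 * N)) ^ N * qPochhammerInf p (p ^ 2) * hshuffle +
    qPochhammerInf (p ^ (2 * N)) (p ^ (2 * N)) ^ N * g N * qPochhammerInf_neg_self_mul_odd hp

end ThetaProduct

section LatticeSum

lemma summable_norm_prod_and_tsum_prod.{u} {ι : Type u} {β R : Type*} [Fintype ι]
    [NormedCommRing R] [CompleteSpace R] (f : ι → β → R) (hf : ∀ i, Summable fun b => ‖f i b‖) :
    (Summable fun n : ι → β => ‖∏ i, f i (n i)‖) ∧
      ∑' n : ι → β, ∏ i, f i (n i) = ∏ i, ∑' b, f i b := by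
  let P (ι : Type u) [Fintype ι] : Prop := ∀ f : ι → β → R, (∀ i, Summable fun b => ‖f i b‖) →
    (Summable fun n : ι → β => ‖∏ i, f i (n i)‖) ∧
      ∑' n : ι → β, ∏ i, f i (n i) = ∏ i, ∑' b, f i b
  have hequiv (α γ : Type u) [Fintype γ] (e : α ≃ γ) (ih : @P α (.ofEquiv γ e.symm)) : P γ := by
    intro f hf
    let _ : Fintype α := .ofEquiv γ e.symm
    let E : (γ → β) ≃ (α → β) := e.symm.arrowCongr (Equiv.refl β)
    obtain ⟨hsum, htsum⟩ := ih (fun i => f (e i)) fun i => hf (e i)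
    have hcomp (n : γ → β) : ∏ i, f (e i) (E n i) = ∏ i, f i (n i) :=
      e.prod_comp fun i => f i (n i)
    rw [← E.summable_iff] at hsum
    rw [← E.tsum_eq, tsum_congr hcomp, e.prod_comp fun i => ∑' b, f i b] at htsum
    exact ⟨hsum.congr fun n => by rw [Function.comp_apply, hcomp], htsum⟩
  have hempty : P PEmpty := fun f _ => ⟨(hasSum_unique _).summable, by simp⟩
  have hoption (α : Type u) [Fintype α] (ih : P α) : P (Option α) := by
    intro f hf
    obtain ⟨hsum, htsum⟩ := ih (fun i => f (some i)) fun i => hf (some i)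
    let e := Equiv.piOptionEquivProd (β := fun _ : Option α => β)
    have hcomp (x : β × (α → β)) :
        ∏ i, f i (e.symm x i) = f none x.1 * ∏ i, f (some i) (x.2 i) := by
      simp [e, Fintype.prod_option]
    constructor
    · rw [← e.symm.summable_iff]
      exact ((hf none).mul_norm hsum).congr fun x => by rw [Function.comp_apply, hcomp]
    · rw [← e.symm.tsum_eq, tsum_congr hcomp, ← tsum_mul_tsum_of_summable_norm (hf none) hsum,
        htsum, Fintype.prod_option]
  exact Fintype.induction_empty_option (P := P) hequiv hempty hoption ι f hf

variable {p q : ℝ}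

lemma rpow_half_mul_add_sq (hq : 0 < q) (m : ℤ) (c : ℝ) :
    q ^ (1 / 2 * ((m : ℝ) + c) ^ 2) =
      q ^ (1 / 2 * c ^ 2) * ((q ^ (1 / 2 : ℝ)) ^ (m ^ 2) * (q ^ c) ^ m) := by
  rw [← Real.rpow_intCast, ← Real.rpow_intCast, ← Real.rpow_mul hq.le, ← Real.rpow_mul hq.le,
    ← Real.rpow_add hq, ← Real.rpow_add hq]
  congr 1
  push_cast
  ring

lemma tsum_rpow_half_mul_add_sq (hq : 0 < q) (c : ℝ) :
    ∑' m : ℤ, q ^ (1 / 2 * ((m : ℝ) + c) ^ 2) =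
      q ^ (1 / 2 * c ^ 2) * ∑' m : ℤ, (q ^ (1 / 2 : ℝ)) ^ (m ^ 2) * (q ^ c) ^ m := by
  simp only [rpow_half_mul_add_sq hq, tsum_mul_left]

lemma tsum_rpow_half_mul_add_one_sub_sq (q c : ℝ) :
    ∑' m : ℤ, q ^ (1 / 2 * ((m : ℝ) + (1 - c)) ^ 2) =
      ∑' m : ℤ, q ^ (1 / 2 * ((m : ℝ) + c) ^ 2) := by
  rw [← (Equiv.subLeft (-1 : ℤ)).tsum_eq]
  refine tsum_congr fun m => ?_
  congr 2
  push_cast [Equiv.subLeft_apply]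
  ring

lemma tsum_rpow_half_mul_sum_add_sq {ι : Type*} [Fintype ι] (hq0 : 0 < q) (hq1 : q < 1)
    (c : ι → ℝ) :
    ∑' n : ι → ℤ, q ^ (1 / 2 * ∑ j, ((n j : ℝ) + c j) ^ 2) =
      ∏ j, ∑' m : ℤ, q ^ (1 / 2 * ((m : ℝ) + c j) ^ 2) := by
  simp only [mul_sum, Real.rpow_sum_of_pos hq0]
  refine (summable_norm_prod_and_tsum_prod
    (fun j (m : ℤ) => q ^ (1 / 2 * ((m : ℝ) + c j) ^ 2)) fun j => ?_).2
  have hsqrt : ‖q ^ (1 / 2 : ℝ)‖ < 1 := by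
    rw [Real.norm_of_nonneg (Real.rpow_nonneg hq0.le _)]
    exact Real.rpow_lt_one hq0.le hq1 one_half_pos
  simpa only [rpow_half_mul_add_sq hq0, norm_mul] using
    (summable_norm_zpow_sq_mul_zpow hsqrt (q ^ c j)).mul_left ‖q ^ (1 / 2 * c j ^ 2)‖

lemma six_mul_sum_range_sq {R : Type*} [CommRing R] (n : ℕ) :
    6 * ∑ j ∈ range n, (j : R) ^ 2 = n * (n - 1) * (2 * n - 1) := by
  induction n with
  | zero => simp
  | succ n ih =>
    rw [sum_range_succ, mul_add, ih]
    push_cast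
    ring

variable {N : ℕ}

lemma pow_two_mul_rpow_div (hp : 0 ≤ p) (hN : N ≠ 0) (n : ℕ) :
    (p ^ (2 * N)) ^ ((n : ℝ) / (2 * N)) = p ^ n := by
  rw [← Real.rpow_natCast_mul hp, ← Real.rpow_natCast]
  congr 1
  push_cast
  field_simp

lemma tsum_spinor_lattice (hp0 : 0 < p) (hp1 : p < 1) (hN : N ≠ 0) :
    ∑' n : Fin N → ℤ, (p ^ (2 * N)) ^ ((1 / 2 : ℝ) * ∑ j : Fin N,
        (((n j : ℝ) + 1 / 2) + ((N : ℝ) - (j.val : ℝ)) / (2 * N)) ^ 2) =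
      (p ^ (2 * N)) ^ (((N : ℝ) - 1) * (2 * (N : ℝ) - 1) / (48 * N)) *
        ∏ j ∈ range N, ∑' m : ℤ, (p ^ N) ^ (m ^ 2) * (p ^ j) ^ m := by
  have hq0 : 0 < p ^ (2 * N) := pow_pos hp0 _
  have hq1 : p ^ (2 * N) < 1 := pow_lt_one₀ hp0.le hp1 (mul_ne_zero two_ne_zero hN)
  have hsqrt : (p ^ (2 * N)) ^ (1 / 2 : ℝ) = p ^ N := by
    rw [← pow_two_mul_rpow_div hp0.le hN N]
    congr 1
    field_simp
  have hcoset (x : ℝ) (j : ℕ) :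
      x + 1 / 2 + ((N : ℝ) - j) / (2 * N) = x + (1 - (j : ℝ) / (2 * N)) := by
    field_simp
    ring
  have hexponent : ∑ j ∈ range N, 1 / 2 * ((j : ℝ) / (2 * N)) ^ 2 =
      ((N : ℝ) - 1) * (2 * (N : ℝ) - 1) / (48 * N) := by
    simp only [div_pow, ← mul_sum, ← sum_div]
    field_simp
    linear_combination 8 * six_mul_sum_range_sq (R := ℝ) N
  simp only [hcoset, tsum_rpow_half_mul_sum_add_sq hq0 hq1, tsum_rpow_half_mul_add_one_sub_sq]
  simp only [tsum_rpow_half_mul_add_sq hq0, hsqrt, pow_two_mul_rpow_div hp0.le hN, prod_mul_distrib]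
  rw [← hexponent, Real.rpow_sum_of_pos hq0, prod_range, prod_range]

lemma tprod_one_add_rpow_add_half (hp : 0 ≤ p) (hN : N ≠ 0) :
    ∏' k : ℕ, (1 + (p ^ (2 * N)) ^ ((k : ℝ) + 1 / 2)) = qPochhammerInf (-p ^ N) (p ^ (2 * N)) := by
  refine tprod_congr fun k => ?_
  rw [show (k : ℝ) + 1 / 2 = ((N + 2 * N * k : ℕ) : ℝ) / (2 * N) by push_cast; field_simp; ring,
    pow_two_mul_rpow_div hp hN, pow_add, pow_mul p (2 * N), neg_mul, sub_neg_eq_add]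

lemma tprod_one_sub_rpow_odd_div (hp : 0 ≤ p) (hN : N ≠ 0) :
    ∏' k : ℕ, (1 - (p ^ (2 * N)) ^ ((2 * (k : ℝ) + 1) / (2 * N))) = qPochhammerInf p (p ^ 2) := by
  refine tprod_congr fun k => ?_
  rw [show 2 * (k : ℝ) + 1 = ((2 * k + 1 : ℕ) : ℝ) by push_cast; rfl,
    pow_two_mul_rpow_div hp hN, pow_succ', pow_mul]

end LatticeSum

/-- Principal specialization character identity for the spinor module `L_{Λ_N}`
    of affine `so(2N+1)`: the sum over the shifted lattice `(ℤ+1/2)^N`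
    (parametrized by `n + 1/2`, `n ∈ ℤ^N`, further shifted by `ρ̄/(2N)`,
    `ρ̄ = (N,…,1)`) with one Ramond fermion equals
    `q^((N−1)(2N−1)/(48N)) · 2 · ∏(1+q^(k−1/2))/∏(1−q^((2k−1)/(2N)))`. -/
theorem stmt11 (N : ℕ) (hN : 2 ≤ N) (q : ℝ) (hq0 : 0 < q) (hq1 : q < 1) :
    (∑' n : Fin N → ℤ,
        q ^ ((1 / 2 : ℝ) * ∑ j : Fin N,
          (((n j : ℝ) + 1 / 2) + ((N : ℝ) - (j.val : ℝ)) / (2 * N)) ^ 2)) *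
      (∏' k : ℕ, (1 + q ^ (k : ℕ))) / ∏' k : ℕ, (1 - q ^ (k + 1)) ^ N =
      q ^ (((N : ℝ) - 1) * (2 * (N : ℝ) - 1) / (48 * N)) * 2 *
        (∏' k : ℕ, (1 + q ^ ((k : ℝ) + 1 / 2))) /
        ∏' k : ℕ, (1 - q ^ ((2 * (k : ℝ) + 1) / (2 * N))) := by
  have hN0 : N ≠ 0 := by lia
  obtain ⟨p, hp0, hp1, rfl⟩ : ∃ p : ℝ, 0 < p ∧ p < 1 ∧ p ^ (2 * N) = q :=
    ⟨q ^ ((2 * N : ℕ) : ℝ)⁻¹, by positivity, Real.rpow_lt_one hq0.le hq1 (by positivity),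
      Real.rpow_inv_natCast_pow hq0.le (by positivity)⟩
  have hp : ‖p‖ < 1 := by rwa [Real.norm_of_nonneg hp0.le]
  have hq : ‖p ^ (2 * N)‖ < 1 := by rwa [Real.norm_of_nonneg hq0.le]
  have hodd : qPochhammerInf p (p ^ 2) ≠ 0 :=
    right_ne_zero_of_mul_eq_one (qPochhammerInf_neg_self_mul_odd hp)
  rw [tsum_spinor_lattice hp0 hp1 hN0, tprod_one_add_pow hq, tprod_one_sub_pow_succ_pow hq,
    tprod_one_add_rpow_add_half hp0.le hN0, tprod_one_sub_rpow_odd_div hp0.le hN0,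
    div_eq_div_iff (pow_ne_zero N (qPochhammerInf_self_ne_zero hq)) hodd]
  linear_combination 2 * (p ^ (2 * N)) ^ (((N : ℝ) - 1) * (2 * (N : ℝ) - 1) / (48 * N)) *
    prod_theta_mul_qPochhammerInf hp0.ne' hp hN0
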